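/- The feedback-parallel translation of the DelaySum diagram simplifies to a single functional update: over the reals, let Add = [fun (x, y) => x + y] : Set ℝ → Set (ℝ × ℝ), UnitDelay = [fun (x, s) => (s, x)] : Set (ℝ × ℝ) → Set (ℝ × ℝ), and Split = [fun x => (x, x)] : Set (ℝ × ℝ) → Set ℝ. Then feedback ( feedback ( feedback ( [fun (f, (c, (a, (e, s)))) => (((f, e), (c, s)), a)] ∘ ((Add ∥ UnitDelay) ∥ Split) ∘ [fun ((c, (a, s')), (f, g)) => (f, (c, (a, (s', g))))] ) ) ) = [fun (e, s) => (s + e, s)] as predicate transformers Set (ℝ × ℝ) → Set (ℝ × ℝ). -/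

import Mathlib

/-!
Everything in the diagram is deterministic, so the whole computation can be carried out on functions.
A parallel composition of functional updates is the update by the product map (`parPT_funPT`).
If the first output of `f : γ × α → γ × β` does not depend on the fed-back input, say it equals
`h x`, then feeding it back gives the update by `x ↦ (f (h x, x)).2` (`feedbackPT_funPT`).
The diagram is `(f, c, a, e, s) ↦ (a, f + e, s, c, a)`, and at each of the three stages the wire
being closed is indeed independent of itself: `f := a`, then `c := a + e`, then `a := s`.
-/

/-- Assert predicate transformer `{p}`. -/
def assertPT {α : Type*} (p : Set α) : Set α → Set α := fun q => p ∩ q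

/-- Nondeterministic update predicate transformer `[r]` for a relation. -/
def relPT {α β : Type*} (r : α → β → Prop) : Set β → Set α :=
  fun q => {x | ∀ y, r x y → y ∈ q}

/-- Functional update predicate transformer `[f]`. -/
def funPT {α β : Type*} (f : α → β) : Set β → Set α := fun q => f ⁻¹' q

/-- Identity predicate transformer. -/
def IdPT {α : Type*} : Set α → Set α := fun q => q

/-- Parallel composition of predicate transformers. -/
def parPT {α β α' β' : Type*} (S : Set β → Set α) (T : Set β' → Set α') :
    Set (β × β') → Set (α × α') :=
  fun q => {x | ∃ u v, u ×ˢ v ⊆ q ∧ x.1 ∈ S u ∧ x.2 ∈ T v}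

/-- Selection operator used in the definition of feedback. -/
def selPT {α β γ : Type*} (S : Set (γ × β) → Set (γ × α)) : Set γ → Set α :=
  assertPT {x | ∃ u, (u, x) ∈ S Set.univ} ∘
    relPT (fun x ux => ux.2 = x ∧ (ux.1, x) ∈ S Set.univ) ∘ S ∘ funPT Prod.fst

/-- Feedback composition of a predicate transformer. -/
def feedbackPT {α β γ : Type*} (S : Set (γ × β) → Set (γ × α)) : Set β → Set α :=
  funPT (fun x => (x, x)) ∘ parPT (selPT S) IdPT ∘ S ∘ funPT Prod.snd

theorem funPT_comp_funPT {α β δ : Type*} (f : α → β) (g : β → δ) :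
    funPT f ∘ funPT g = funPT (g ∘ f) := rfl

theorem parPT_funPT {α β α' β' : Type*} (f : α → β) (g : α' → β') :
    parPT (funPT f) (funPT g) = funPT (Prod.map f g) := by
  funext q
  ext ⟨x, y⟩
  constructor
  · rintro ⟨u, v, huv, hx, hy⟩
    exact huv ⟨hx, hy⟩
  · intro h
    refine ⟨{f x}, {g y}, ?_, rfl, rfl⟩
    rintro ⟨a, b⟩ ⟨rfl, rfl⟩
    exact h

/-- Feedback of a functional update whose first output is independent of the fed-back input.
Nonemptiness of `γ` is needed because `selPT` asserts that some fed-back value exists. -/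
theorem feedbackPT_funPT {α β γ : Type*} [Nonempty γ] (f : γ × α → γ × β) (h : α → γ)
    (hf : ∀ u x, (f (u, x)).1 = h x) :
    feedbackPT (funPT f) = funPT (fun x => (f (h x, x)).2) := by
  obtain ⟨u₀⟩ := ‹Nonempty γ›
  funext q
  ext x
  constructor
  · rintro ⟨a, b, hab, ⟨-, hsel⟩, hb⟩
    have ha : (f (u₀, x)).1 ∈ a := hsel (u₀, x) ⟨rfl, trivial⟩
    rw [hf] at ha
    exact hab (Set.mk_mem_prod ha hb)
  · intro hx
    refine ⟨{h x}, {x}, ?_, ⟨⟨u₀, trivial⟩, ?_⟩, rfl⟩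
    · rintro ⟨a, b⟩ ⟨ha, hb⟩
      obtain rfl : a = h x := ha
      obtain rfl : b = x := hb
      exact hx
    · rintro ⟨u, x'⟩ ⟨rfl, -⟩
      exact hf u x'

theorem delaySum_feedback_parallel :
    feedbackPT (feedbackPT (feedbackPT
      (funPT (fun ((f, c, a, e, s) : ℝ × ℝ × ℝ × ℝ × ℝ) => (((f, e), (c, s)), a)) ∘
        parPT
          (parPT (funPT (fun ((x, y) : ℝ × ℝ) => x + y))
            (funPT (fun ((x, s) : ℝ × ℝ) => (s, x))))
          (funPT (fun (x : ℝ) => (x, x))) ∘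
        funPT (fun (((c, a, s'), (f, g)) : (ℝ × ℝ × ℝ) × (ℝ × ℝ)) =>
          (f, (c, (a, (s', g)))))))) =
      funPT (fun ((e, s) : ℝ × ℝ) => (s + e, s)) := by
  rw [parPT_funPT, parPT_funPT, funPT_comp_funPT, funPT_comp_funPT,
    feedbackPT_funPT _ (fun ((_, a, _, _) : ℝ × ℝ × ℝ × ℝ) => a) (fun _ _ => rfl),
    feedbackPT_funPT _ (fun ((a, e, _) : ℝ × ℝ × ℝ) => a + e) (fun _ _ => rfl),
    feedbackPT_funPT _ (fun ((_, s) : ℝ × ℝ) => s) (fun _ _ => rfl)]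
  rfl
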